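/- arXiv:2209.01748 — 6 statements merged into one kernel-verified Lean document; each statement's English description precedes it below -/
import Mathlib

section
/- Let G be a finite simple graph on 6 vertices with minimum degree at least 3 and with degree sum equal to 24 (= 6·6 − 12). Then G has an edge of density at most 16, i.e. there are adjacent vertices u, v with deg(u)·deg(v) ≤ 16. -/
/-- Every finite simple graph on 6 vertices with minimum degree at least 3
and degree sum 24 has an edge of density at most 16. -/
theorem stmt_5 {V : Type*} [Fintype V] [DecidableEq V]
    (G : SimpleGraph V) [DecidableRel G.Adj]
    (hcard : Fintype.card V = 6)
    (hmin : ∀ v : V, 3 ≤ G.degree v)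
    (hsum : ∑ v : V, G.degree v = 24) :
    ∃ u v : V, G.Adj u v ∧ G.degree u * G.degree v ≤ 16 := by
  have hnb : ∀ v : V, ∃ w, G.Adj v w := fun v =>
    (G.degree_pos_iff_exists_adj v).1 (by have := hmin v; omega)
  by_cases h : ∃ v : V, G.degree v = 3
  · obtain ⟨v, hv⟩ := h
    obtain ⟨w, hw⟩ := hnb v
    refine ⟨v, w, hw, ?_⟩
    have := G.degree_lt_card_verts w
    rw [hv]
    omega
  · have h4 : ∀ v ∈ (Finset.univ : Finset V), 4 ≤ G.degree v := by
      intro v _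
      have h1 := hmin v
      have h2 : G.degree v ≠ 3 := fun e => h ⟨v, e⟩
      omega
    have hs : ∑ _v : V, 4 = ∑ v : V, G.degree v := by
      rw [hsum]; simp [hcard]
    have heq := (Finset.sum_eq_sum_iff_of_le h4).1 hs
    have hne : Nonempty V := Fintype.card_pos_iff.1 (by omega)
    obtain ⟨v⟩ := hne
    obtain ⟨w, hw⟩ := hnb v
    refine ⟨v, w, hw, ?_⟩
    rw [← heq v (Finset.mem_univ v), ← heq w (Finset.mem_univ w)]
end

section
/- Let G be a finite simple graph on 7 vertices with minimum degree at least 3, with degree sum equal to 30 (= 6·7 − 12), and which is K_{3,3}-free. Then G has an edge of density at most 16, i.e. there are adjacent vertices u, v with deg(u)·deg(v) ≤ 16. -/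
/-- A graph contains K33 if there are six pairwise distinct vertices
a1, a2, a3, b1, b2, b3 with each ai adjacent to each bj; otherwise it is K33-free. -/
def HasK33 {V : Type*} (G : SimpleGraph V) : Prop :=
  ∃ a₁ a₂ a₃ b₁ b₂ b₃ : V, ([a₁, a₂, a₃, b₁, b₂, b₃] : List V).Nodup ∧
    ∀ a ∈ ({a₁, a₂, a₃} : Set V), ∀ b ∈ ({b₁, b₂, b₃} : Set V), G.Adj a b

/-- Every finite simple K33-free graph on 7 vertices with minimum degree at
least 3 and degree sum 30 has an edge of density at most 16. -/
theorem stmt_6 {V : Type*} [Fintype V] [DecidableEq V]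
    (G : SimpleGraph V) [DecidableRel G.Adj]
    (hcard : Fintype.card V = 7)
    (hmin : ∀ v : V, 3 ≤ G.degree v)
    (hsum : ∑ v : V, G.degree v = 30)
    (hK33 : ¬ HasK33 G) :
    ∃ u v : V, G.Adj u v ∧ G.degree u * G.degree v ≤ 16 := by
  by_contra hcon
  push Not at hcon
  by_cases h3 : ∃ v, G.degree v = 3
  · -- the neighbours of a vertex of degree 3 are adjacent to everything
    obtain ⟨v, hv⟩ := h3
    apply hK33
    have hall : ∀ u, G.Adj v u → ∀ w, w ≠ u → G.Adj u w := by
      intro u hu w hw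
      have h1 := hcon v u hu
      have h2 : 6 ≤ (G.neighborFinset u).card := by
        rw [G.card_neighborFinset_eq_degree]
        rw [hv] at h1
        omega
      have h4 : G.neighborFinset u ⊆ Finset.univ.erase u := by
        intro x hx
        have := (G.mem_neighborFinset u x).1 hx
        simp [this.ne']
      have h5 : G.neighborFinset u = Finset.univ.erase u := by
        apply Finset.eq_of_subset_of_card_le h4
        rw [Finset.card_erase_of_mem (Finset.mem_univ _), Finset.card_univ, hcard]
        exact h2
      rw [← G.mem_neighborFinset, h5]
      simp [hw]
    rw [← G.card_neighborFinset_eq_degree] at hv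
    have hc : 3 ≤ ((G.neighborFinset v)ᶜ).card := by
      rw [Finset.card_compl, hcard, hv]
      norm_num
    obtain ⟨B, hB, hBc⟩ := Finset.exists_subset_card_eq hc
    have hadj : ∀ a ∈ G.neighborFinset v, ∀ b ∈ B, a ≠ b ∧ G.Adj a b := by
      intro a ha b hb
      have hne : b ≠ a := by
        rintro rfl
        exact (Finset.mem_compl.1 (hB hb)) ha
      exact ⟨hne.symm, hall a ((G.mem_neighborFinset v a).1 ha) b hne⟩
    generalize G.neighborFinset v = A at *
    obtain ⟨a₁, a₂, a₃, h12, h13, h23, rfl⟩ := Finset.card_eq_three.1 hv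
    obtain ⟨b₁, b₂, b₃, k12, k13, k23, rfl⟩ := Finset.card_eq_three.1 hBc
    refine ⟨a₁, a₂, a₃, b₁, b₂, b₃, ?_, ?_⟩
    · simp at hadj ⊢
      tauto
    · intro a ha b hb
      exact (hadj a (by simpa using ha) b (by simpa using hb)).2
  · push Not at h3
    have h4 : ∀ v, 4 ≤ G.degree v := fun v => by
      have := hmin v
      have := h3 v
      omega
    have hle : ∑ v : V, 5 ≤ ∑ v : V, (G.degree v + if G.degree v = 4 then 1 else 0) := by
      apply Finset.sum_le_sum
      intro v _
      have := h4 v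
      split_ifs <;> omega
    rw [Finset.sum_add_distrib, hsum, ← Finset.card_filter] at hle
    simp only [Finset.sum_const, Finset.card_univ, hcard, smul_eq_mul] at hle
    obtain ⟨v, hv⟩ : (Finset.univ.filter fun v => G.degree v = 4).Nonempty := by
      rw [← Finset.card_pos]
      omega
    have hv4 : G.degree v = 4 := by simpa using hv
    have hsub : G.neighborFinset v ⊆ (Finset.univ.filter fun v => G.degree v = 4)ᶜ := by
      intro u hu
      have := hcon v u ((G.mem_neighborFinset v u).1 hu)
      rw [hv4] at this
      simp
      omega
    have := Finset.card_le_card hsub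
    rw [Finset.card_compl, hcard, G.card_neighborFinset_eq_degree, hv4] at this
    omega
end

section
/- Let G be a finite simple graph on 8 vertices with minimum degree at least 3, with degree sum equal to 36 (= 6·8 − 12), and which is K_{3,3}-free. Then G has an edge of density at most 18, i.e. there are adjacent vertices u, v with deg(u)·deg(v) ≤ 18. -/
lemma hasK33_of_finsets {V : Type*} [DecidableEq V] (G : SimpleGraph V) (A B : Finset V)
    (hA : 3 ≤ A.card) (hB : 3 ≤ B.card) (h : ∀ a ∈ A, ∀ b ∈ B, G.Adj a b) : HasK33 G := by
  obtain ⟨A', hA', hA3⟩ := Finset.exists_subset_card_eq hA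
  obtain ⟨B', hB', hB3⟩ := Finset.exists_subset_card_eq hB
  obtain ⟨a₁, a₂, a₃, h12, h13, h23, rfl⟩ := Finset.card_eq_three.mp hA3
  obtain ⟨b₁, b₂, b₃, k12, k13, k23, rfl⟩ := Finset.card_eq_three.mp hB3
  have key : ∀ a ∈ ({a₁, a₂, a₃} : Finset V), ∀ b ∈ ({b₁, b₂, b₃} : Finset V), G.Adj a b :=
    fun a ha b hb => h a (hA' ha) b (hB' hb)
  have key2 : ∀ a ∈ ({a₁, a₂, a₃} : Finset V), ∀ b ∈ ({b₁, b₂, b₃} : Finset V), a ≠ b :=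
    fun a ha b hb => (key a ha b hb).ne
  refine ⟨a₁, a₂, a₃, b₁, b₂, b₃, ?_, ?_⟩
  · simp at key2
    simp
    tauto
  · intro a ha b hb
    exact key a (by simpa using ha) b (by simpa using hb)

/-- Every finite simple K33-free graph on 8 vertices with minimum degree at
least 3 and degree sum 36 has an edge of density at most 18. -/
theorem stmt_7 {V : Type*} [Fintype V] [DecidableEq V]
    (G : SimpleGraph V) [DecidableRel G.Adj]
    (hcard : Fintype.card V = 8)
    (hmin : ∀ v : V, 3 ≤ G.degree v)
    (hsum : ∑ v : V, G.degree v = 36)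
    (hK33 : ¬ HasK33 G) :
    ∃ u v : V, G.Adj u v ∧ G.degree u * G.degree v ≤ 18 := by
  by_contra! hd
  -- no vertex of degree 3
  have h4 : ∀ v : V, 4 ≤ G.degree v := by
    intro v
    by_contra hv
    have hv3 : G.degree v = 3 := by have := hmin v; omega
    apply hK33
    have hc : (G.neighborFinset v).card = 3 := hv3
    apply hasK33_of_finsets G (G.neighborFinset v) (G.neighborFinset v)ᶜ
    · omega
    · rw [Finset.card_compl]; omega
    · intro a ha b hb
      have hva : G.Adj v a := by simpa using ha
      have h7 := hd v a hva
      rw [hv3] at h7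
      have hsub : G.neighborFinset a ⊆ Finset.univ.erase a := by
        intro x hx
        have : G.Adj a x := by simpa using hx
        simp [this.ne']
      have hce : (Finset.univ.erase a).card = 7 := by
        rw [Finset.card_erase_of_mem (Finset.mem_univ a), Finset.card_univ, hcard]
      have hda : (G.neighborFinset a).card = G.degree a := rfl
      have heq := Finset.eq_of_subset_of_card_le hsub (by omega)
      have hne : b ≠ a := by
        rintro rfl
        exact (Finset.mem_compl.mp hb) ha
      have : b ∈ G.neighborFinset a := by rw [heq]; simp [hne]
      simpa using this
  set I : Finset V := Finset.univ.filter (fun v => G.degree v = 4) with hI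
  have hIc : 4 ≤ I.card := by
    have h1 : ∑ v : V, 5 ≤ ∑ v : V, (G.degree v + if G.degree v = 4 then 1 else 0) := by
      apply Finset.sum_le_sum
      intro v _
      have := h4 v
      split_ifs <;> omega
    rw [Finset.sum_add_distrib, hsum, ← Finset.card_filter] at h1
    rw [← hI, Finset.sum_const, Finset.card_univ, hcard, smul_eq_mul] at h1
    omega
  have hcc : Iᶜ.card = 8 - I.card := by rw [Finset.card_compl, hcard]
  have hN : ∀ v ∈ I, G.neighborFinset v = Iᶜ := by
    intro v hv
    have hv4 : G.degree v = 4 := by simpa [hI] using hv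
    apply Finset.eq_of_subset_of_card_le
    · intro x hx
      have hvx : G.Adj v x := by simpa using hx
      have := hd v x hvx
      rw [hv4] at this
      simp only [hI, Finset.mem_compl, Finset.mem_filter, Finset.mem_univ, true_and]
      omega
    · have : (G.neighborFinset v).card = 4 := hv4
      omega
  apply hK33
  apply hasK33_of_finsets G I Iᶜ
  · omega
  · obtain ⟨v, hv⟩ := Finset.card_pos.mp (show 0 < I.card by omega)
    rw [← hN v hv]
    exact hmin v
  · intro a ha b hb
    rw [← hN a ha] at hb
    simpa using hb
end

section
/- Let G be a finite simple graph on 9 vertices with minimum degree at least 3, with degree sum equal to 42 (= 6·9 − 12), and which is K_{3,3}-free. Then G has an edge of density at most 20, i.e. there are adjacent vertices u, v with deg(u)·deg(v) ≤ 20. -/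
/-- Every finite simple K33-free graph on 9 vertices with minimum degree at
least 3 and degree sum 42 has an edge of density at most 20. -/
theorem stmt_8 {V : Type*} [Fintype V] [DecidableEq V]
    (G : SimpleGraph V) [DecidableRel G.Adj]
    (hcard : Fintype.card V = 9)
    (hmin : ∀ v : V, 3 ≤ G.degree v)
    (hsum : ∑ v : V, G.degree v = 42)
    (hK33 : ¬ HasK33 G) :
    ∃ u v : V, G.Adj u v ∧ G.degree u * G.degree v ≤ 20 := by
  by_contra! hcon
  -- no vertex of degree 3: its neighbours have degree at least 7, giving a K33
  have h4 : ∀ v : V, 4 ≤ G.degree v := by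
    intro v
    by_contra! hv
    have hv3 : G.degree v = 3 := by have := hmin v; omega
    have h7 : ∀ u, G.Adj v u → 7 ≤ G.degree u := by
      intro u hu
      have := hcon v u hu
      rw [hv3] at this
      omega
    rw [← G.card_neighborFinset_eq_degree, Finset.card_eq_three] at hv3
    obtain ⟨x, y, z, hxy, hxz, hyz, hN⟩ := hv3
    have hm : ∀ u, u ∈ ({x, y, z} : Finset V) → (G.neighborFinset u)ᶜ.card ≤ 2 := by
      intro u hu
      rw [← hN, SimpleGraph.mem_neighborFinset] at hu
      have := h7 u hu
      rw [Finset.card_compl, G.card_neighborFinset_eq_degree, hcard]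
      omega
    have hx := hm x (by simp)
    have hy := hm y (by simp)
    have hz := hm z (by simp)
    have hU : ((G.neighborFinset x)ᶜ ∪ (G.neighborFinset y)ᶜ ∪ (G.neighborFinset z)ᶜ).card ≤ 6 := by
      have h1 := Finset.card_union_le ((G.neighborFinset x)ᶜ ∪ (G.neighborFinset y)ᶜ)
        (G.neighborFinset z)ᶜ
      have h2 := Finset.card_union_le (G.neighborFinset x)ᶜ (G.neighborFinset y)ᶜ
      omega
    have hC : 3 ≤ ((G.neighborFinset x)ᶜ ∪ (G.neighborFinset y)ᶜ ∪
        (G.neighborFinset z)ᶜ)ᶜ.card := by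
      rw [Finset.card_compl, hcard]
      omega
    obtain ⟨t, ht, ht3⟩ := Finset.exists_subset_card_eq hC
    obtain ⟨a, b, c, hab, hac, hbc, rfl⟩ := Finset.card_eq_three.mp ht3
    have key : ∀ w ∈ ({a, b, c} : Finset V), G.Adj x w ∧ G.Adj y w ∧ G.Adj z w := by
      intro w hw
      have := ht hw
      simpa [and_assoc] using this
    obtain ⟨ax, ay, az⟩ := key a (by simp)
    obtain ⟨bx, bY, bz⟩ := key b (by simp)
    obtain ⟨cx, cy, cz⟩ := key c (by simp)
    refine hK33 ⟨x, y, z, a, b, c, ?_, ?_⟩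
    · simp [hxy, hxz, hyz, hab, hac, hbc, ax.ne, ay.ne, az.ne, bx.ne, bY.ne, bz.ne,
        cx.ne, cy.ne, cz.ne]
    · rintro p (rfl | rfl | rfl) q (rfl | rfl | rfl) <;> assumption
  -- no vertex of degree 4: the degree sum would be at least 44
  have h5 : ∀ v : V, 5 ≤ G.degree v := by
    intro v
    by_contra! hv
    have hv4 : G.degree v = 4 := by have := h4 v; omega
    have h6 : ∀ u ∈ G.neighborFinset v, 6 ≤ G.degree u := by
      intro u hu
      have := hcon v u (by simpa using hu)
      rw [hv4] at this
      omega
    have s1 := Finset.card_nsmul_le_sum _ _ _ h6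
    have s2 := Finset.card_nsmul_le_sum (G.neighborFinset v)ᶜ _ _ (fun u _ => h4 u)
    have s3 := Finset.sum_add_sum_compl (G.neighborFinset v) (fun u => G.degree u)
    rw [Finset.card_compl, G.card_neighborFinset_eq_degree, hcard, hv4] at s2
    rw [G.card_neighborFinset_eq_degree, hv4] at s1
    simp only [smul_eq_mul] at s1 s2
    omega
  have s := Finset.card_nsmul_le_sum Finset.univ _ _ (fun u _ => h5 u)
  rw [Finset.card_univ, hcard, hsum] at s
  simp at s
end

section
/- Let G be a finite simple graph on 10 vertices with minimum degree at least 4, with degree sum equal to 48 (= 6·10 − 12), and which is K_{3,3}-free. Then G has an edge of density at most 20, i.e. there are adjacent vertices u, v with deg(u)·deg(v) ≤ 20. -/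
/-- Every finite simple K33-free graph on 10 vertices with minimum degree at
least 4 and degree sum 48 has an edge of density at most 20. -/
theorem stmt_9 {V : Type*} [Fintype V] [DecidableEq V]
    (G : SimpleGraph V) [DecidableRel G.Adj]
    (hcard : Fintype.card V = 10)
    (hmin : ∀ v : V, 4 ≤ G.degree v)
    (hsum : ∑ v : V, G.degree v = 48)
    (hK33 : ¬ HasK33 G) :
    ∃ u v : V, G.Adj u v ∧ G.degree u * G.degree v ≤ 20 := by
  by_contra! hcon
  set A := Finset.univ.filter (fun v => G.degree v = 4) with hA
  set B := Finset.univ.filter (fun v => 6 ≤ G.degree v) with hB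
  have hAc : A.card = ∑ v : V, if G.degree v = 4 then 1 else 0 := by
    rw [hA, Finset.card_filter]
  have hBc : B.card = ∑ v : V, if 6 ≤ G.degree v then 1 else 0 := by
    rw [hB, Finset.card_filter]
  have h1 : 40 + 2 * B.card ≤ 48 := by
    have : ∑ v : V, (4 + 2 * (if 6 ≤ G.degree v then 1 else 0)) ≤ ∑ v : V, G.degree v := by
      apply Finset.sum_le_sum
      intro v _
      have := hmin v
      split_ifs <;> omega
    rw [Finset.sum_add_distrib, ← Finset.mul_sum, ← hBc, hsum] at this
    simp [hcard] at this
    omega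
  have h2 : 50 + B.card ≤ 48 + A.card := by
    have : ∑ v : V, (5 + (if 6 ≤ G.degree v then 1 else 0)) ≤
        ∑ v : V, (G.degree v + (if G.degree v = 4 then 1 else 0)) := by
      apply Finset.sum_le_sum
      intro v _
      have := hmin v
      split_ifs <;> omega
    rw [Finset.sum_add_distrib, Finset.sum_add_distrib, ← hBc, ← hAc, hsum] at this
    simp [hcard] at this
    omega
  have hsub : ∀ a ∈ A, G.neighborFinset a ⊆ B := by
    intro a ha v hv
    have ha4 : G.degree a = 4 := by simpa [hA] using ha
    have := hcon a v (by simpa using hv)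
    rw [ha4] at this
    simp only [hB, Finset.mem_filter, Finset.mem_univ, true_and]
    omega
  have hcd : ∀ a ∈ A, (G.neighborFinset a).card = 4 := by
    intro a ha
    rw [G.card_neighborFinset_eq_degree]
    simpa [hA] using ha
  obtain ⟨a, ha⟩ : A.Nonempty := Finset.card_pos.mp (by omega)
  have hB4 : 4 ≤ B.card := hcd a ha ▸ Finset.card_le_card (hsub a ha)
  have hadj : ∀ a ∈ A, ∀ b ∈ B, G.Adj a b := by
    intro a ha b hb
    have := Finset.eq_of_subset_of_card_le (hsub a ha) (by rw [hcd a ha]; omega)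
    rw [← this] at hb
    simpa using hb
  obtain ⟨a₁, ha₁, a₂, ha₂, a₃, ha₃, h12, h13, h23⟩ :=
    Finset.two_lt_card.mp (show 2 < A.card by omega)
  obtain ⟨b₁, hb₁, b₂, hb₂, b₃, hb₃, k12, k13, k23⟩ :=
    Finset.two_lt_card.mp (show 2 < B.card by omega)
  have hne : ∀ a ∈ A, ∀ b ∈ B, a ≠ b := fun a ha b hb => (hadj a ha b hb).ne
  apply hK33
  refine ⟨a₁, a₂, a₃, b₁, b₂, b₃, ?_, ?_⟩
  · simp [h12, h13, h23, k12, k13, k23, hne _ ha₁ _ hb₁, hne _ ha₁ _ hb₂, hne _ ha₁ _ hb₃,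
      hne _ ha₂ _ hb₁, hne _ ha₂ _ hb₂, hne _ ha₂ _ hb₃,
      hne _ ha₃ _ hb₁, hne _ ha₃ _ hb₂, hne _ ha₃ _ hb₃]
  · rintro a (rfl | rfl | rfl) b (rfl | rfl | rfl) <;> apply hadj <;> assumption
end

section
/- Let Γ be a subgroup of SL(2,ℝ) containing the parabolic matrix [[1, m₁],[0, 1]] and a matrix [[a, b],[m₂, d]] of determinant 1 with a + d = 2, and suppose D := m₁·m₂ > 4. Then Γ contains a hyperbolic element γ (with |tr(γ)| = D − 2) whose translation length ℓ = inf_{z ∈ ℍ} dist(z, γ·z) satisfies cosh(ℓ/2) = (D − 2)/2; equivalently, ℓ = 2·arccosh((D − 2)/2). -/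
open Matrix

/-- The inverse hyperbolic cosine on [1, ∞): arccosh x = log (x + sqrt (x² - 1)). -/
noncomputable def arccosh (x : ℝ) : ℝ := Real.log (x + Real.sqrt (x ^ 2 - 1))

/-- Explicit displacement formula for an element of SL(2,ℝ) acting on the upper half-plane. -/
lemma displacement (g : Matrix.SpecialLinearGroup (Fin 2) ℝ) (z : UpperHalfPlane) :
    Real.cosh (dist z (g • z) / 2) ^ 2 = ((g 0 0 + g 1 1) / 2) ^ 2 +
      (g 1 0 * z.re ^ 2 + (g 1 1 - g 0 0) * z.re - g 0 1 + g 1 0 * z.im ^ 2) ^ 2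
        / (4 * z.im ^ 2) := by
  have h1 : Real.cosh (dist z (g • z)) = 2 * Real.cosh (dist z (g • z) / 2) ^ 2 - 1 := by
    have := Real.cosh_two_mul (dist z (g • z) / 2)
    rw [show 2 * (dist z (g • z) / 2) = dist z (g • z) by ring] at this
    rw [this, Real.sinh_sq]; ring
  have hdet : g 0 0 * g 1 1 - g 0 1 * g 1 0 = 1 := by
    have := g.det_coe
    rwa [Matrix.det_fin_two] at this
  have hz := UpperHalfPlane.coe_specialLinearGroup_apply g z
  have hy := z.im_pos
  have hY := (g • z).im_pos
  rw [UpperHalfPlane.cosh_dist'] at h1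
  have hre := congrArg Complex.re hz
  have him := congrArg Complex.im hz
  simp only [Algebra.algebraMap_self, RingHom.id_apply, Complex.div_re, Complex.div_im,
    Complex.normSq_apply, Complex.add_re, Complex.add_im, Complex.mul_re, Complex.mul_im,
    Complex.ofReal_re, Complex.ofReal_im, UpperHalfPlane.coe_re, UpperHalfPlane.coe_im,
    zero_mul, sub_zero, add_zero] at hre him
  generalize Real.cosh (dist z (g • z) / 2) = C at *
  generalize (g • z).re = X at *
  generalize (g • z).im = Y at *
  generalize z.re = x at *
  generalize z.im = y at *
  generalize g 0 0 = p at *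
  generalize g 0 1 = q at *
  generalize g 1 0 = r at *
  generalize g 1 1 = s at *
  obtain ⟨N, hN⟩ : ∃ N, N = (r * x + s) * (r * x + s) + r * y * (r * y) := ⟨_, rfl⟩
  rw [← hN] at hre him
  have hN0 : N ≠ 0 := by
    rintro rfl
    simp at him
    linarith
  have hX : X * N = (p * x + q) * (r * x + s) + p * r * y ^ 2 := by
    rw [hre]; field_simp
  have hYN : Y * N = y := by
    rw [him]; field_simp; linear_combination hdet
  have hK : (X ^ 2 + Y ^ 2) * N = (p * x + q) ^ 2 + p ^ 2 * y ^ 2 := by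
    apply mul_right_cancel₀ hN0
    have : (X ^ 2 + Y ^ 2) * N * N = (X * N) ^ 2 + (Y * N) ^ 2 := by ring
    rw [this, hX, hYN, hN]
    linear_combination (-(p * s - q * r) - 1) * y ^ 2 * hdet
  have h2 : ((x - X) ^ 2 + y ^ 2 + Y ^ 2) / (2 * y * Y) =
      (N * (x ^ 2 + y ^ 2) - 2 * x * (X * N) + (X ^ 2 + Y ^ 2) * N) / (2 * y ^ 2) := by
    rw [div_eq_div_iff (by positivity) (by positivity)]
    linear_combination (-(2 * y * ((x - X) ^ 2 + y ^ 2 + Y ^ 2))) * hYN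
  rw [h2, hX, hK, hN] at h1
  have hC : C ^ 2 = (((r * x + s) * (r * x + s) + r * y * (r * y)) * (x ^ 2 + y ^ 2) -
      2 * x * ((p * x + q) * (r * x + s) + p * r * y ^ 2) +
      ((p * x + q) ^ 2 + p ^ 2 * y ^ 2) + 2 * y ^ 2) / (4 * y ^ 2) := by
    field_simp
    field_simp at h1
    linear_combination -h1
  rw [hC]
  field_simp
  linear_combination (-8 * y ^ 2) * hdet

lemma translation_length (g : Matrix.SpecialLinearGroup (Fin 2) ℝ) (t : ℝ) (ht : 2 < t)
    (htr : |g 0 0 + g 1 1| = t) (hr : g 1 0 ≠ 0) :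
    (⨅ z : UpperHalfPlane, dist z (g • z)) = 2 * Real.arcosh (t / 2) := by
  have ht2 : (g 0 0 + g 1 1) ^ 2 = t ^ 2 := by rw [← htr, sq_abs]
  have hdet : g 0 0 * g 1 1 - g 0 1 * g 1 0 = 1 := by
    have := g.det_coe
    rwa [Matrix.det_fin_two] at this
  apply le_antisymm
  · have hs : 0 < √(t ^ 2 - 4) := Real.sqrt_pos.2 (by nlinarith)
    have hss : √(t ^ 2 - 4) ^ 2 = t ^ 2 - 4 := Real.sq_sqrt (by nlinarith)
    have hy0 : 0 < √(t ^ 2 - 4) / (2 * |g 1 0|) := by positivity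
    let z : UpperHalfPlane :=
      ⟨⟨(g 0 0 - g 1 1) / (2 * g 1 0), √(t ^ 2 - 4) / (2 * |g 1 0|)⟩, hy0⟩
    have hzr : z.re = (g 0 0 - g 1 1) / (2 * g 1 0) := rfl
    have hzi : z.im = √(t ^ 2 - 4) / (2 * |g 1 0|) := rfl
    refine (ciInf_le ⟨0, ?_⟩ z).trans ?_
    · rintro _ ⟨w, rfl⟩; exact dist_nonneg
    have h := displacement g z
    have h0 : g 1 0 * z.re ^ 2 + (g 1 1 - g 0 0) * z.re - g 0 1 + g 1 0 * z.im ^ 2 = 0 := by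
      rw [hzr, hzi, div_pow _ (2 * |g 1 0|), mul_pow, sq_abs, hss, ← ht2]
      field_simp
      linear_combination 4 * hdet
    rw [h0] at h
    have hc : Real.cosh (dist z (g • z) / 2) = t / 2 := by
      rw [← sq_eq_sq₀ (Real.cosh_pos _).le (by linarith), h, div_pow, ht2]; ring
    have := Real.arcosh_cosh (x := dist z (g • z) / 2) (by positivity)
    rw [hc] at this
    linarith
  · have : Nonempty UpperHalfPlane := ⟨UpperHalfPlane.I⟩
    refine le_ciInf fun z => ?_
    have h := displacement g z
    have hc : t / 2 ≤ Real.cosh (dist z (g • z) / 2) := by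
      rw [← sq_le_sq₀ (by linarith) (Real.cosh_pos _).le, h, div_pow (g 0 0 + g 1 1), ht2, div_pow]
      have := z.im_pos
      exact le_add_of_nonneg_right (by positivity)
    have := (Real.arcosh_le_arcosh (by linarith) (Real.cosh_pos _)).2 hc
    rw [Real.arcosh_cosh (by positivity)] at this
    linarith

/-- If a subgroup Γ of SL(2,ℝ) contains the parabolic matrix
!![1, m₁; 0, 1] and a matrix !![a, b; m₂, d] of determinant 1 with a + d = 2, and
D := m₁·m₂ > 4, then Γ contains a hyperbolic element γ with |tr γ| = D - 2 whose
translation length ℓ = inf_z dist(z, γ·z) satisfies cosh(ℓ/2) = (D-2)/2; equivalently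
ℓ = 2·arccosh((D-2)/2). -/
theorem stmt_11 (m₁ m₂ a b d : ℝ)
    (Γ : Subgroup (Matrix.SpecialLinearGroup (Fin 2) ℝ))
    (A B : Matrix.SpecialLinearGroup (Fin 2) ℝ)
    (hA : (A : Matrix (Fin 2) (Fin 2) ℝ) = !![1, m₁; 0, 1])
    (hB : (B : Matrix (Fin 2) (Fin 2) ℝ) = !![a, b; m₂, d])
    (hdet : a * d - b * m₂ = 1)
    (htr : a + d = 2)
    (hD : 4 < m₁ * m₂)
    (hAΓ : A ∈ Γ) (hBΓ : B ∈ Γ) :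
    ∃ γ ∈ Γ,
      2 < |Matrix.trace ((γ : Matrix.SpecialLinearGroup (Fin 2) ℝ) :
        Matrix (Fin 2) (Fin 2) ℝ)| ∧
      |Matrix.trace ((γ : Matrix.SpecialLinearGroup (Fin 2) ℝ) :
        Matrix (Fin 2) (Fin 2) ℝ)| = m₁ * m₂ - 2 ∧
      Real.cosh ((⨅ z : UpperHalfPlane, dist z (γ • z)) / 2) = (m₁ * m₂ - 2) / 2 ∧
      (⨅ z : UpperHalfPlane, dist z (γ • z)) = 2 * arccosh ((m₁ * m₂ - 2) / 2) := by
  have e : ((A⁻¹ * B : Matrix.SpecialLinearGroup (Fin 2) ℝ) : Matrix (Fin 2) (Fin 2) ℝ) =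
      !![a - m₁ * m₂, b - m₁ * d; m₂, d] := by
    rw [Matrix.SpecialLinearGroup.coe_mul, Matrix.SpecialLinearGroup.coe_inv, hA, hB,
      Matrix.adjugate_fin_two_of]
    ext i j
    fin_cases i <;> fin_cases j <;> simp [Matrix.mul_apply, Fin.sum_univ_two] <;> ring
  have htrace : |a - m₁ * m₂ + d| = m₁ * m₂ - 2 := by
    rw [show a - m₁ * m₂ + d = -(m₁ * m₂ - 2) by linarith, abs_neg, abs_of_pos (by linarith)]
  have hL := translation_length (A⁻¹ * B) (m₁ * m₂ - 2) (by linarith)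
    (by rw [e]; simpa using htrace)
    (by
      rw [e]
      rintro h
      have h : m₂ = 0 := by simpa using h
      rw [h] at hD
      linarith)
  refine ⟨A⁻¹ * B, Γ.mul_mem (Γ.inv_mem hAΓ) hBΓ, ?_, ?_, ?_, hL⟩
  · rw [e, Matrix.trace_fin_two_of, htrace]; linarith
  · rw [e, Matrix.trace_fin_two_of, htrace]
  · rw [hL, mul_div_cancel_left₀ _ two_ne_zero, Real.cosh_arcosh (by linarith)]
end
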